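/- Let |M| = |W| = 3. No mechanism is ex-ante pairwise stable: for every mechanism φ there exist a prior ψ over preference profiles and a coalition consisting of one man and one woman that blocks φ ex-ante at ψ. -/

import Mathlib

open scoped ENNReal

namespace Unraveling

variable (M W : Type*) [Fintype M] [DecidableEq M] [Fintype W] [DecidableEq W]

/-- A matching between men `M` and women `W`.  `Sum.inl m` denotes man `m`,
`Sum.inr w` denotes woman `w`; `toFun a = a` means agent `a` is unmatched. -/
structure Matching where
  toFun : M ⊕ W → M ⊕ W
  man_range : ∀ m : M, toFun (Sum.inl m) = Sum.inl m ∨ ∃ w : W, toFun (Sum.inl m) = Sum.inr w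
  woman_range : ∀ w : W, toFun (Sum.inr w) = Sum.inr w ∨ ∃ m : M, toFun (Sum.inr w) = Sum.inl m
  mutual_cond : ∀ (m : M) (w : W), toFun (Sum.inl m) = Sum.inr w ↔ toFun (Sum.inr w) = Sum.inl m

/-- A preference profile: each man has a ranking (a bijection onto `{1,…,|W|+1}`,
encoded as an `Equiv` onto `Fin (|W|+1)`) of the women together with the option
(`none`) of remaining unmatched, and symmetrically for women. -/
structure Profile where
  mpref : M → (Option W ≃ Fin (Fintype.card W + 1))
  wpref : W → (Option M ≃ Fin (Fintype.card M + 1))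

variable {M W}

/-- The partner of man `m` under matching `μ` (`none` if unmatched). -/
def Matching.partnerM (μ : Matching M W) (m : M) : Option W :=
  match μ.toFun (Sum.inl m) with
  | Sum.inl _ => none
  | Sum.inr w => some w

/-- The partner of woman `w` under matching `μ` (`none` if unmatched). -/
def Matching.partnerW (μ : Matching M W) (w : W) : Option M :=
  match μ.toFun (Sum.inr w) with
  | Sum.inr _ => none
  | Sum.inl m => some m

/-- The rank (`1` = most preferred) that man `m` assigns to `o` under profile `P`. -/
def mrank (P : Profile M W) (m : M) (o : Option W) : ℕ := (P.mpref m o : ℕ) + 1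

/-- The rank (`1` = most preferred) that woman `w` assigns to `o` under profile `P`. -/
def wrank (P : Profile M W) (w : W) (o : Option M) : ℕ := (P.wpref w o : ℕ) + 1

/-- The rank that agent `a` assigns to his/her partner under matching `μ`. -/
def prank (P : Profile M W) (μ : Matching M W) : M ⊕ W → ℕ
  | Sum.inl m => mrank P m (μ.partnerM m)
  | Sum.inr w => wrank P w (μ.partnerW w)

/-- The rank that agent `a` assigns to remaining unmatched. -/
def urank (P : Profile M W) : M ⊕ W → ℕ
  | Sum.inl m => mrank P m none
  | Sum.inr w => wrank P w none

/-- Stability of a matching at a profile. -/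
def IsStable (P : Profile M W) (μ : Matching M W) : Prop :=
  (∀ a : M ⊕ W, prank P μ a ≤ urank P a) ∧
  (∀ (m : M) (w : W), mrank P m (some w) < prank P μ (Sum.inl m) →
     prank P μ (Sum.inr w) < wrank P w (some m))

/-- A mechanism maps each preference profile to a probability distribution over matchings. -/
abbrev Mechanism (M W : Type*) [Fintype M] [DecidableEq M] [Fintype W] [DecidableEq W] :=
  Profile M W → PMF (Matching M W)

/-- The probability that `p` assigns to the set `s`. -/
noncomputable def prob {α : Type*} (p : PMF α) (s : Set α) : ℝ≥0∞ :=
  ∑' x, s.indicator (fun y => p y) x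

/-- CDF of the rank that agent `a` assigns to his/her random partner, when the
matching is drawn from `p` and the profile is `P`. -/
noncomputable def cdfAt (P : Profile M W) (p : PMF (Matching M W)) (a : M ⊕ W) (n : ℕ) : ℝ≥0∞ :=
  prob p {μ | prank P μ a ≤ n}

/-- `SD F G` : the rank distribution with CDF `F` strictly first-order
stochastically dominates the one with CDF `G`. -/
def SD (F G : ℕ → ℝ≥0∞) : Prop := (∀ n, G n ≤ F n) ∧ ∃ n, G n < F n

/-- A coalition consisting of at most one man and at most one woman. -/
def IsPairCoalition (A' : Set (M ⊕ W)) : Prop :=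
  {m : M | Sum.inl m ∈ A'}.Subsingleton ∧ {w : W | Sum.inr w ∈ A'}.Subsingleton

/-- Coalition `A'` blocks mechanism `φ` ex-post at profile `P`. -/
def BlocksExPost (A' : Set (M ⊕ W)) (φ : Mechanism M W) (P : Profile M W) : Prop :=
  A'.Nonempty ∧ ∃ φ' : Mechanism M W,
    (∀ a ∈ A', prob (φ' P) {μ | μ.toFun a ∈ A'} = 1) ∧
    (∀ a ∈ A', SD (cdfAt P (φ' P) a) (cdfAt P (φ P) a))

def ExPostStable (φ : Mechanism M W) : Prop :=
  ∀ (P : Profile M W) (A' : Set (M ⊕ W)), ¬ BlocksExPost A' φ P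

def ExPostPairwiseStable (φ : Mechanism M W) : Prop :=
  ∀ (P : Profile M W) (A' : Set (M ⊕ W)), IsPairCoalition A' → ¬ BlocksExPost A' φ P

/-- Ex-ante CDF of the rank of agent `a`'s partner under mechanism `φ`, when
the profile is drawn from prior `ψ`. -/
noncomputable def cdfExAnte (ψ : PMF (Profile M W)) (φ : Mechanism M W) (a : M ⊕ W) (n : ℕ) : ℝ≥0∞ :=
  ∑' P, ψ P * cdfAt P (φ P) a n

/-- Coalition `A'` blocks mechanism `φ` ex-ante at prior `ψ`. -/
def BlocksExAnte (A' : Set (M ⊕ W)) (φ : Mechanism M W) (ψ : PMF (Profile M W)) : Prop :=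
  A'.Nonempty ∧ ∃ φ' : Mechanism M W,
    (∀ a ∈ A', (∑' P, ψ P * prob (φ' P) {μ | μ.toFun a ∈ A'}) = 1) ∧
    (∀ a ∈ A', SD (cdfExAnte ψ φ' a) (cdfExAnte ψ φ a))

def ExAnteStableAt (φ : Mechanism M W) (ψ : PMF (Profile M W)) : Prop :=
  ∀ A' : Set (M ⊕ W), ¬ BlocksExAnte A' φ ψ

def ExAnteStable (φ : Mechanism M W) : Prop := ∀ ψ, ExAnteStableAt φ ψ

def ExAntePairwiseStable (φ : Mechanism M W) : Prop :=
  ∀ (ψ : PMF (Profile M W)) (A' : Set (M ⊕ W)), IsPairCoalition A' → ¬ BlocksExAnte A' φ ψ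

/-- `prefEq P P' a` : profiles `P` and `P'` give agent `a` the same preferences. -/
def prefEq (P P' : Profile M W) : M ⊕ W → Prop
  | Sum.inl m => P.mpref m = P'.mpref m
  | Sum.inr w => P.wpref w = P'.wpref w

/-- The event `Y_a(P̃_a)`: profiles in which `a`'s preferences agree with `Pt`
and every other member of the coalition `A'` has preferences in his/her
acceptance set `R`. -/
def interimEvent (A' : Set (M ⊕ W)) (R : (M ⊕ W) → Set (Profile M W)) (a : M ⊕ W)
    (Pt : Profile M W) : Set (Profile M W) :=
  {P | prefEq P Pt a ∧ ∀ a' ∈ A', a' ≠ a → P ∈ R a'}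

/-- CDF of the rank of `a`'s partner under `φ`, with the profile drawn from `ψ`
conditioned on the event `Y`. -/
noncomputable def cdfCond (ψ : PMF (Profile M W)) (Y : Set (Profile M W)) (φ : Mechanism M W)
    (a : M ⊕ W) (n : ℕ) : ℝ≥0∞ :=
  (∑' P, Y.indicator (fun P' => ψ P' * cdfAt P' (φ P') a n) P) / prob ψ Y

/-- Coalition `A'` blocks mechanism `φ` in the interim at prior `ψ`.  Each `R a`
is the set of profiles in which `a`'s preferences are ones at which `a` agrees to
deviate; it is required to depend only on `a`'s own preferences. -/
def BlocksInterim (A' : Set (M ⊕ W)) (φ : Mechanism M W) (ψ : PMF (Profile M W)) : Prop :=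
  A'.Nonempty ∧ ∃ (φ' : Mechanism M W) (R : (M ⊕ W) → Set (Profile M W)),
    (∀ (a : M ⊕ W) (P P' : Profile M W), prefEq P P' a → (P ∈ R a ↔ P' ∈ R a)) ∧
    (∀ a ∈ A', ∀ P : Profile M W, prob (φ' P) {μ | μ.toFun a ∈ A'} = 1) ∧
    (∀ a ∈ A', ∀ Pt : Profile M W,
      Pt ∈ R a ↔ (0 < prob ψ (interimEvent A' R a Pt) ∧
        SD (cdfCond ψ (interimEvent A' R a Pt) φ' a)
           (cdfCond ψ (interimEvent A' R a Pt) φ a))) ∧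
    0 < prob ψ {P | ∀ a ∈ A', P ∈ R a}

def InterimStableAt (φ : Mechanism M W) (ψ : PMF (Profile M W)) : Prop :=
  ∀ A' : Set (M ⊕ W), ¬ BlocksInterim A' φ ψ

def InterimStable (φ : Mechanism M W) : Prop := ∀ ψ, InterimStableAt φ ψ

def InterimPairwiseStable (φ : Mechanism M W) : Prop :=
  ∀ (ψ : PMF (Profile M W)) (A' : Set (M ⊕ W)), IsPairCoalition A' → ¬ BlocksInterim A' φ ψ

/-- `MRanks P m rw ru` : man `m` assigns rank `rw w` to each woman `w` and
rank `ru` to remaining unmatched. -/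
def MRanks (P : Profile M W) (m : M) (rw : W → ℕ) (ru : ℕ) : Prop :=
  (∀ w, mrank P m (some w) = rw w) ∧ mrank P m none = ru

/-- `WRanks P w rm ru` : woman `w` assigns rank `rm m` to each man `m` and
rank `ru` to remaining unmatched. -/
def WRanks (P : Profile M W) (w : W) (rm : M → ℕ) (ru : ℕ) : Prop :=
  (∀ m, wrank P w (some m) = rm m) ∧ wrank P w none = ru

instance (P : Profile M W) (m : M) (rw : W → ℕ) (ru : ℕ) : Decidable (MRanks P m rw ru) :=
  decidable_of_iff ((∀ w, mrank P m (some w) = rw w) ∧ mrank P m none = ru) Iff.rfl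

instance (P : Profile M W) (w : W) (rm : M → ℕ) (ru : ℕ) : Decidable (WRanks P w rm ru) :=
  decidable_of_iff ((∀ m, wrank P w (some m) = rm m) ∧ wrank P w none = ru) Iff.rfl

/-- The perfect matching induced by a bijection `e : M ≃ W`. -/
def matchingOf (e : M ≃ W) : Matching M W where
  toFun a :=
    match a with
    | Sum.inl m => Sum.inr (e m)
    | Sum.inr w => Sum.inl (e.symm w)
  man_range m := Or.inr ⟨e m, rfl⟩
  woman_range w := Or.inr ⟨e.symm w, rfl⟩
  mutual_cond m w := by
    constructor
    · intro h
      simp only [Sum.inr.injEq] at h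
      simp [← h]
    · intro h
      simp only [Sum.inl.injEq] at h
      simp [← h]

/-- `P'` is the permutation of profile `P` obtained by (`σM`, `σW`):
`P_a(a') = P'_{σ(a)}(σ(a'))` for all agents `a` and all `a'` in the domain of `P_a`. -/
def IsPermutedProfile (σM : Equiv.Perm M) (σW : Equiv.Perm W) (P P' : Profile M W) : Prop :=
  (∀ m w, P'.mpref (σM m) (some (σW w)) = P.mpref m (some w)) ∧
  (∀ m, P'.mpref (σM m) none = P.mpref m none) ∧
  (∀ w m, P'.wpref (σW w) (some (σM m)) = P.wpref w (some m)) ∧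
  (∀ w, P'.wpref (σW w) none = P.wpref w none)

/-- Probability (jointly over the profile drawn from `ψ` and the internal
randomization of `φ`) that agent `a` is assigned a partner of rank exactly `k`. -/
noncomputable def probRankEq (ψ : PMF (Profile M W)) (φ : Mechanism M W) (a : M ⊕ W) (k : ℕ) : ℝ≥0∞ :=
  ∑' P, ψ P * prob (φ P) {μ | prank P μ a = k}

/-- CDF of a distribution on ranks `{1,2,3}` with probabilities `q1`, `q2`, `q3`. -/
def cdf3 (q1 q2 q3 : ℝ) (n : ℕ) : ℝ :=
  (if 1 ≤ n then q1 else 0) + (if 2 ≤ n then q2 else 0) + (if 3 ≤ n then q3 else 0)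

/-- Strict first-order stochastic dominance for real-valued rank CDFs. -/
def SDR (F G : ℕ → ℝ) : Prop := (∀ n, G n ≤ F n) ∧ ∃ n, G n < F n

end Unraveling

namespace Unraveling

/-!
A man and a woman who rank each other first must be matched almost surely, or else they block.
Consider a pair `m₀`, `w₀` under two equally likely profiles, in both of which some couple
`m₁`, `w₁` is mutually first.

* At `P`, `m₀` and `w₂` are mutually first, `m₀` ranks `w₀` second, and the top two choices of `w₀`
  are `m₀` and `m₁`. Both are taken, so `w₀` gets rank at least `3`.
* At `Q` the two sides are interchanged: `w₀` is matched to her first choice `m₂`, and `m₀` gets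
  rank at least `3`.

By matching with each other at both profiles, `m₀` and `w₀` each replace the lottery between ranks
`1` and at least `3` by the fair lottery between ranks `1` and `2`.
-/

section Probability

variable {α : Type*}

lemma prob_eq_toOuterMeasure (p : PMF α) (s : Set α) : prob p s = p.toOuterMeasure s :=
  (p.toOuterMeasure_apply s).symm

lemma prob_le_one (p : PMF α) (s : Set α) : prob p s ≤ 1 :=
  (ENNReal.tsum_le_tsum (Set.indicator_le_self s p)).trans_eq p.tsum_coe

lemma prob_eq_one_iff {p : PMF α} {s : Set α} : prob p s = 1 ↔ p.support ⊆ s := by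
  rw [prob_eq_toOuterMeasure, PMF.toOuterMeasure_apply_eq_one_iff]

lemma prob_eq_zero_iff {p : PMF α} {s : Set α} : prob p s = 0 ↔ Disjoint p.support s := by
  rw [prob_eq_toOuterMeasure, PMF.toOuterMeasure_apply_eq_zero_iff]

lemma tsum_pure_mul (a : α) (g : α → ℝ≥0∞) : ∑' x, PMF.pure a x * g x = g a := by
  classical simp [PMF.pure_apply]

lemma tsum_map_mul {ι : Type*} (p : PMF ι) (f : ι → α) (g : α → ℝ≥0∞) :
    ∑' x, p.map f x * g x = ∑' i, p i * g (f i) := by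
  classical
  simp_rw [PMF.map_apply, ← ENNReal.tsum_mul_right]
  rw [ENNReal.tsum_comm]
  simp [ite_mul]

/-- The lottery that yields `x` and `y` with probability `1/2` each (the point mass at `x` when
`x = y`). -/
noncomputable def fairMix (x y : α) : PMF α :=
  (PMF.uniformOfFintype Bool).map fun b => cond b x y

lemma tsum_fairMix_mul (x y : α) (g : α → ℝ≥0∞) :
    ∑' z, fairMix x y z * g z = 2⁻¹ * (g x + g y) := by
  rw [fairMix, tsum_map_mul]
  simp [mul_add]

end Probability

section Dominance

/-- The CDF of the rank that is constantly `k`. -/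
noncomputable def stepCDF (k n : ℕ) : ℝ≥0∞ :=
  if k ≤ n then 1 else 0

lemma stepCDF_of_le {k n : ℕ} (h : k ≤ n) : stepCDF k n = 1 :=
  if_pos h

lemma stepCDF_of_lt {k n : ℕ} (h : n < k) : stepCDF k n = 0 :=
  if_neg h.not_ge

lemma stepCDF_le_one (k n : ℕ) : stepCDF k n ≤ 1 := by
  unfold stepCDF
  split_ifs <;> simp

lemma stepCDF_antitone : Antitone stepCDF := by
  intro k l hkl n
  obtain hn | hn := le_or_gt l n
  · rw [stepCDF_of_le (hkl.trans hn)]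
    exact stepCDF_le_one l n
  · simp [stepCDF_of_lt hn]

lemma sd_fair_lottery {j k l : ℕ} (hkl : k < l) {F G : ℕ → ℝ≥0∞}
    (hF : F ≤ stepCDF j) (hG : G ≤ stepCDF l) :
    SD (fun n => 2⁻¹ * (stepCDF j n + stepCDF k n)) (fun n => 2⁻¹ * (F n + G n)) := by
  refine ⟨fun n => mul_le_mul_right
    (add_le_add (hF n) ((hG n).trans (stepCDF_antitone hkl.le n))) _, k, ?_⟩
  have hFk : F k ≠ ∞ :=
    ne_top_of_le_ne_top ENNReal.one_ne_top ((hF k).trans (stepCDF_le_one j k))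
  have hGk : G k < stepCDF k k :=
    calc G k ≤ stepCDF l k := hG k
      _ = 0 := stepCDF_of_lt hkl
      _ < 1 := one_pos
      _ = stepCDF k k := (stepCDF_of_le le_rfl).symm
  exact (ENNReal.mul_lt_mul_iff_right (by simp) (by simp)).2
    (ENNReal.add_lt_add_of_le_of_lt hFk (hF k) hGk)

end Dominance

section Ranking

variable {M W : Type*} [Fintype M] [Fintype W]

lemma exists_ranking_top_two {X : Type*} [Fintype X] {x y : X} (hxy : x ≠ y) :
    ∃ r : Option X ≃ Fin (Fintype.card X + 1), (r (some x) : ℕ) = 0 ∧ (r (some y) : ℕ) = 1 := by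
  classical
  have hcard : 1 < Fintype.card X := Fintype.one_lt_card_iff.2 ⟨x, y, hxy⟩
  let r := Fintype.equivFinOfCardEq (Fintype.card_option (α := X))
  obtain ⟨σ, hσx, hσy⟩ := MulAction.is_two_pretransitive_iff.1
    (Equiv.Perm.isMultiplyPretransitive (Fin (Fintype.card X + 1)) 2)
    (r.injective.ne (Option.some_injective X |>.ne hxy))
    (show (⟨0, by omega⟩ : Fin (Fintype.card X + 1)) ≠ ⟨1, by omega⟩ by simp)
  exact ⟨r.trans σ, congrArg Fin.val hσx, congrArg Fin.val hσy⟩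

lemma exists_profile_top_two {f₁ f₂ : M → W} {g₁ g₂ : W → M}
    (hf : ∀ m, f₁ m ≠ f₂ m) (hg : ∀ w, g₁ w ≠ g₂ w) :
    ∃ P : Profile M W,
      (∀ m, mrank P m (some (f₁ m)) = 1 ∧ mrank P m (some (f₂ m)) = 2) ∧
      (∀ w, wrank P w (some (g₁ w)) = 1 ∧ wrank P w (some (g₂ w)) = 2) := by
  choose r hr₁ hr₂ using fun m => exists_ranking_top_two (hf m)
  choose s hs₁ hs₂ using fun w => exists_ranking_top_two (hg w)
  exact ⟨⟨r, s⟩, by simp [mrank, hr₁, hr₂], by simp [wrank, hs₁, hs₂]⟩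

lemma mrank_injective (P : Profile M W) (m : M) : Function.Injective (mrank P m) :=
  (add_left_injective 1).comp (Fin.val_injective.comp (P.mpref m).injective)

lemma wrank_injective (P : Profile M W) (w : W) : Function.Injective (wrank P w) :=
  (add_left_injective 1).comp (Fin.val_injective.comp (P.wpref w).injective)

lemma one_le_prank (P : Profile M W) (μ : Matching M W) (a : M ⊕ W) : 1 ≤ prank P μ a := by
  cases a <;> simp [prank, mrank, wrank]

lemma three_le_prank_inl {P : Profile M W} {μ : Matching M W} {m : M} {w₁ w₂ : W}
    (h₁ : mrank P m (some w₁) = 1) (h₂ : mrank P m (some w₂) = 2)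
    (hμ₁ : μ.partnerM m ≠ some w₁) (hμ₂ : μ.partnerM m ≠ some w₂) :
    3 ≤ prank P μ (Sum.inl m) := by
  have hne₁ := (mrank_injective P m).ne hμ₁
  have hne₂ := (mrank_injective P m).ne hμ₂
  have hpos := one_le_prank P μ (Sum.inl m)
  simp only [prank] at hpos ⊢
  omega

lemma three_le_prank_inr {P : Profile M W} {μ : Matching M W} {w : W} {m₁ m₂ : M}
    (h₁ : wrank P w (some m₁) = 1) (h₂ : wrank P w (some m₂) = 2)
    (hμ₁ : μ.partnerW w ≠ some m₁) (hμ₂ : μ.partnerW w ≠ some m₂) :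
    3 ≤ prank P μ (Sum.inr w) := by
  have hne₁ := (wrank_injective P w).ne hμ₁
  have hne₂ := (wrank_injective P w).ne hμ₂
  have hpos := one_le_prank P μ (Sum.inr w)
  simp only [prank] at hpos ⊢
  omega

end Ranking

section Matching

variable {M W : Type*}

lemma Matching.partnerM_eq_some_iff {μ : Matching M W} {m : M} {w : W} :
    μ.partnerM m = some w ↔ μ.toFun (Sum.inl m) = Sum.inr w := by
  unfold Matching.partnerM
  cases μ.toFun (Sum.inl m) <;> simp

lemma Matching.partnerW_eq_some_iff {μ : Matching M W} {m : M} {w : W} :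
    μ.partnerW w = some m ↔ μ.partnerM m = some w := by
  rw [partnerM_eq_some_iff, μ.mutual_cond]
  unfold Matching.partnerW
  cases μ.toFun (Sum.inr w) <;> simp

lemma Matching.partnerM_ne_some {μ : Matching M W} {m m' : M} {w : W}
    (h : μ.partnerM m' = some w) (hne : m ≠ m') : μ.partnerM m ≠ some w := fun h' =>
  hne (Option.some_injective M <|
    (partnerW_eq_some_iff.2 h').symm.trans (partnerW_eq_some_iff.2 h))

lemma Matching.partnerW_ne_some {μ : Matching M W} {m : M} {w w' : W}
    (h : μ.partnerM m = some w') (hne : w ≠ w') : μ.partnerW w ≠ some m := fun h' =>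
  hne (Option.some_injective W <| (partnerW_eq_some_iff.1 h').symm.trans h)

variable [DecidableEq M] [DecidableEq W]

/-- The matching in which `m` and `w` are partners and everybody else is unmatched. -/
def Matching.couple (m : M) (w : W) : Matching M W where
  toFun := Equiv.swap (Sum.inl m) (Sum.inr w)
  man_range m' := by
    rw [Equiv.swap_apply_def]
    split_ifs <;> simp_all
  woman_range w' := by
    rw [Equiv.swap_apply_def]
    split_ifs <;> simp_all
  mutual_cond m' w' := by
    rw [← Equiv.eq_symm_apply, Equiv.symm_swap, eq_comm]

lemma Matching.partnerM_couple (m : M) (w : W) : (couple m w).partnerM m = some w :=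
  partnerM_eq_some_iff.2 (Equiv.swap_apply_left _ _)

lemma Matching.partnerW_couple (m : M) (w : W) : (couple m w).partnerW w = some m :=
  partnerW_eq_some_iff.2 (partnerM_couple m w)

end Matching

section CDF

variable {M W : Type*} [Fintype M] [Fintype W] {P : Profile M W} {p : PMF (Matching M W)}
  {a : M ⊕ W} {k : ℕ}

lemma cdfAt_pure (P : Profile M W) (μ : Matching M W) (a : M ⊕ W) :
    cdfAt P (PMF.pure μ) a = stepCDF (prank P μ a) := by
  classical
  funext n
  simp [cdfAt, prob_eq_toOuterMeasure, stepCDF]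

lemma cdfAt_le_stepCDF (h : ∀ μ ∈ p.support, k ≤ prank P μ a) : cdfAt P p a ≤ stepCDF k := by
  intro n
  obtain hkn | hnk := le_or_gt k n
  · exact (prob_le_one p _).trans_eq (stepCDF_of_le hkn).symm
  · rw [stepCDF_of_lt hnk]
    exact (prob_eq_zero_iff.2 <| Set.disjoint_left.2 fun μ hμ hle =>
      hnk.not_ge ((h μ hμ).trans hle)).le

lemma sd_stepCDF_cdfAt (h : ∀ μ ∈ p.support, k ≤ prank P μ a) {μ : Matching M W}
    (hμ : μ ∈ p.support) (hlt : k < prank P μ a) : SD (stepCDF k) (cdfAt P p a) := by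
  refine ⟨cdfAt_le_stepCDF h, k, ?_⟩
  have hne : cdfAt P p a k ≠ 1 := fun hone => hlt.not_ge (prob_eq_one_iff.1 hone hμ)
  rw [stepCDF_of_le le_rfl]
  exact (prob_le_one p _).lt_of_ne hne

end CDF

section Blocking

variable {M W : Type*} [Fintype M] [DecidableEq M] [Fintype W] [DecidableEq W]
  {φ : Mechanism M W} {P Q : Profile M W} {m : M} {w : W}

lemma cdfExAnte_const_pure (ψ : PMF (Profile M W)) (μ : Matching M W) (a : M ⊕ W) :
    cdfExAnte ψ (fun _ => PMF.pure μ) a = fun n => ∑' P, ψ P * stepCDF (prank P μ a) n := by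
  funext n
  simp only [cdfExAnte, cdfAt_pure]

lemma cdfExAnte_pure (P : Profile M W) (φ : Mechanism M W) (a : M ⊕ W) :
    cdfExAnte (PMF.pure P) φ a = cdfAt P (φ P) a := by
  funext n
  exact tsum_pure_mul P fun R => cdfAt R (φ R) a n

lemma cdfExAnte_fairMix (P Q : Profile M W) (φ : Mechanism M W) (a : M ⊕ W) :
    cdfExAnte (fairMix P Q) φ a = fun n => 2⁻¹ * (cdfAt P (φ P) a n + cdfAt Q (φ Q) a n) := by
  funext n
  exact tsum_fairMix_mul P Q fun R => cdfAt R (φ R) a n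

lemma blocksExAnte_pair {ψ : PMF (Profile M W)}
    (hm : SD (fun n => ∑' P, ψ P * stepCDF (mrank P m (some w)) n) (cdfExAnte ψ φ (Sum.inl m)))
    (hw : SD (fun n => ∑' P, ψ P * stepCDF (wrank P w (some m)) n) (cdfExAnte ψ φ (Sum.inr w))) :
    BlocksExAnte {Sum.inl m, Sum.inr w} φ ψ := by
  refine ⟨⟨Sum.inl m, by simp⟩, fun _ => PMF.pure (Matching.couple m w), fun a ha => ?_,
    fun a ha => ?_⟩
  · have hmem : (Matching.couple m w).toFun a ∈ ({Sum.inl m, Sum.inr w} : Set (M ⊕ W)) := by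
      rcases ha with rfl | rfl <;> simp [Matching.couple]
    have hprob : prob (PMF.pure (Matching.couple m w))
        {μ | μ.toFun a ∈ ({Sum.inl m, Sum.inr w} : Set (M ⊕ W))} = 1 :=
      prob_eq_one_iff.2 (by simpa using hmem)
    simp only [hprob, mul_one, PMF.tsum_coe]
  · rw [cdfExAnte_const_pure]
    rcases ha with rfl | rfl
    · simpa only [prank, Matching.partnerM_couple] using hm
    · simpa only [prank, Matching.partnerW_couple] using hw

/-- `m` and `w` are each other's first choices at `P`. -/
def Profile.MutualFirst (P : Profile M W) (m : M) (w : W) : Prop :=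
  mrank P m (some w) = 1 ∧ wrank P w (some m) = 1

lemma blocksExAnte_pure_of_mutualFirst (h : P.MutualFirst m w) {μ : Matching M W}
    (hμ : μ ∈ (φ P).support) (hne : μ.partnerM m ≠ some w) :
    BlocksExAnte {Sum.inl m, Sum.inr w} φ (PMF.pure P) := by
  have hm : 1 < prank P μ (Sum.inl m) :=
    (one_le_prank P μ _).lt_of_ne' (h.1 ▸ (mrank_injective P m).ne hne)
  have hw : 1 < prank P μ (Sum.inr w) :=
    (one_le_prank P μ _).lt_of_ne'
      (h.2 ▸ (wrank_injective P w).ne (Matching.partnerW_eq_some_iff.not.2 hne))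
  apply blocksExAnte_pair <;> simp only [cdfExAnte_pure, tsum_pure_mul, h.1, h.2]
  · exact sd_stepCDF_cdfAt (fun ν _ => one_le_prank P ν _) hμ hm
  · exact sd_stepCDF_cdfAt (fun ν _ => one_le_prank P ν _) hμ hw

lemma blocksExAnte_fairMix
    (hPm : mrank P m (some w) = 2) (hPw : wrank P w (some m) = 1)
    (hQm : mrank Q m (some w) = 1) (hQw : wrank Q w (some m) = 2)
    (hP : ∀ μ ∈ (φ P).support, 3 ≤ prank P μ (Sum.inr w))
    (hQ : ∀ μ ∈ (φ Q).support, 3 ≤ prank Q μ (Sum.inl m)) :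
    BlocksExAnte {Sum.inl m, Sum.inr w} φ (fairMix P Q) := by
  apply blocksExAnte_pair <;>
    simp only [cdfExAnte_fairMix, tsum_fairMix_mul, hPm, hPw, hQm, hQw]
  · simp only [add_comm (stepCDF 2 _)]
    exact sd_fair_lottery (by norm_num) (cdfAt_le_stepCDF fun μ _ => one_le_prank P μ _)
      (cdfAt_le_stepCDF hQ)
  · simp only [add_comm (cdfAt P _ _ _)]
    exact sd_fair_lottery (by norm_num) (cdfAt_le_stepCDF fun μ _ => one_le_prank Q μ _)
      (cdfAt_le_stepCDF hP)

end Blocking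

section Profiles

variable {M W : Type*} [Fintype M] [Fintype W] {m₀ m₁ m₂ : M} {w₀ w₁ w₂ : W}

lemma exists_profile_crowding_woman (hm : m₀ ≠ m₁) (h₀₁ : w₀ ≠ w₁) (h₀₂ : w₀ ≠ w₂)
    (h₁₂ : w₁ ≠ w₂) :
    ∃ P : Profile M W, P.MutualFirst m₀ w₂ ∧ P.MutualFirst m₁ w₁ ∧
      mrank P m₀ (some w₀) = 2 ∧ wrank P w₀ (some m₀) = 1 ∧ wrank P w₀ (some m₁) = 2 := by
  classical
  obtain ⟨P, hM, hW⟩ := exists_profile_top_two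
    (f₁ := fun m => if m = m₁ then w₁ else w₂) (f₂ := fun _ => w₀)
    (g₁ := fun w => if w = w₁ then m₁ else m₀) (g₂ := fun w => if w = w₁ then m₀ else m₁)
    (fun m => by split_ifs <;> simp [h₀₁.symm, h₀₂.symm])
    (fun w => by split_ifs <;> simp [hm, hm.symm])
  have hm₀ := hM m₀
  have hm₁ := hM m₁
  have hw₀ := hW w₀
  have hw₁ := hW w₁
  have hw₂ := hW w₂
  simp only [hm, h₀₁, h₁₂.symm, if_true, if_false] at hm₀ hm₁ hw₀ hw₁ hw₂
  exact ⟨P, ⟨hm₀.1, hw₂.1⟩, ⟨hm₁.1, hw₁.1⟩, hm₀.2, hw₀⟩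

lemma exists_profile_crowding_man (hw : w₀ ≠ w₁) (h₀₁ : m₀ ≠ m₁) (h₀₂ : m₀ ≠ m₂)
    (h₁₂ : m₁ ≠ m₂) :
    ∃ Q : Profile M W, Q.MutualFirst m₂ w₀ ∧ Q.MutualFirst m₁ w₁ ∧
      wrank Q w₀ (some m₀) = 2 ∧ mrank Q m₀ (some w₀) = 1 ∧ mrank Q m₀ (some w₁) = 2 := by
  obtain ⟨P, h₂, h₁, hranks⟩ := exists_profile_crowding_woman hw h₀₁ h₀₂ h₁₂
  exact ⟨⟨P.wpref, P.mpref⟩, h₂.symm, h₁.symm, hranks⟩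

end Profiles

theorem no_mechanism_exAntePairwiseStable_general (M W : Type*)
    [Fintype M] [DecidableEq M] [Fintype W] [DecidableEq W]
    (hM : 3 ≤ Fintype.card M) (hW : 3 ≤ Fintype.card W) (φ : Mechanism M W) :
    ∃ (ψ : PMF (Profile M W)) (m : M) (w : W), BlocksExAnte {Sum.inl m, Sum.inr w} φ ψ := by
  by_contra! hφ
  have matched {R : Profile M W} {m : M} {w : W} (h : R.MutualFirst m w) :
      ∀ μ ∈ (φ R).support, μ.partnerM m = some w := fun μ hμ =>
    of_not_not fun hne => hφ _ m w (blocksExAnte_pure_of_mutualFirst h hμ hne)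
  obtain ⟨m₀, m₁, m₂, hm₀₁, hm₀₂, hm₁₂⟩ := Fintype.two_lt_card_iff.1 hM
  obtain ⟨w₀, w₁, w₂, hw₀₁, hw₀₂, hw₁₂⟩ := Fintype.two_lt_card_iff.1 hW
  obtain ⟨P, hP₀₂, hP₁₁, hPm, hPw, hPw'⟩ := exists_profile_crowding_woman hm₀₁ hw₀₁ hw₀₂ hw₁₂
  obtain ⟨Q, hQ₂₀, hQ₁₁, hQw, hQm, hQm'⟩ := exists_profile_crowding_man hw₀₁ hm₀₁ hm₀₂ hm₁₂
  have hP (μ) (hμ : μ ∈ (φ P).support) : 3 ≤ prank P μ (Sum.inr w₀) :=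
    three_le_prank_inr hPw hPw' (Matching.partnerW_ne_some (matched hP₀₂ μ hμ) hw₀₂)
      (Matching.partnerW_ne_some (matched hP₁₁ μ hμ) hw₀₁)
  have hQ (μ) (hμ : μ ∈ (φ Q).support) : 3 ≤ prank Q μ (Sum.inl m₀) :=
    three_le_prank_inl hQm hQm' (Matching.partnerM_ne_some (matched hQ₂₀ μ hμ) hm₀₂)
      (Matching.partnerM_ne_some (matched hQ₁₁ μ hμ) hm₀₁)
  exact hφ _ m₀ w₀ (blocksExAnte_fairMix hPm hPw hQm hQw hP hQ)

/-- With three men and three women, no mechanism is ex-ante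
pairwise stable: for every mechanism there are a prior and a coalition of one man
and one woman blocking it ex-ante. -/
theorem no_mechanism_exAntePairwiseStable (M W : Type*)
    [Fintype M] [DecidableEq M] [Fintype W] [DecidableEq W]
    (hM : Fintype.card M = 3) (hW : Fintype.card W = 3)
    (φ : Mechanism M W) :
    ∃ (ψ : PMF (Profile M W)) (m : M) (w : W),
      BlocksExAnte {Sum.inl m, Sum.inr w} φ ψ :=
  no_mechanism_exAntePairwiseStable_general M W hM.ge hW.ge φ

end Unraveling
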